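/- arXiv:1310.8010 — 4 statements merged into one kernel-verified Lean document; each statement's English description precedes it below -/
import Mathlib

section
/- A Hilbert–Schmidt operator A on H belongs to HS₀ if and only if there exists a finite-rank orthogonal projection P : H → H such that the range of P is contained in W₊, P extends continuously to W, and A = P ∘ A ∘ P. -/
open scoped ENNReal

noncomputable section

/-- The squared Hilbert–Schmidt norm of a continuous linear operator `A` on a real
Hilbert space, computed with respect to a Hilbert basis `b`:
`‖A‖_HS² = ∑ i, ‖A (b i)‖²` (valued in `ℝ≥0∞`). -/
def hsNormSq {H : Type*} [NormedAddCommGroup H] [InnerProductSpace ℝ H] {ι : Type*}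
    (b : HilbertBasis ι ℝ H) (A : H →L[ℝ] H) : ℝ≥0∞ :=
  ∑' i, (‖A (b i)‖₊ : ℝ≥0∞) ^ 2

/-- `A` is Hilbert–Schmidt: its Hilbert–Schmidt norm (w.r.t. any Hilbert basis) is finite. -/
def IsHilbertSchmidt {H : Type*} [NormedAddCommGroup H] [InnerProductSpace ℝ H]
    (A : H →L[ℝ] H) : Prop :=
  ∀ ⦃ι : Type⦄ (b : HilbertBasis ι ℝ H), hsNormSq b A < ∞

/-- `W₊`: the set of `h ∈ H` such that the functional `k ↦ ⟨k, h⟩_H` extends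
continuously to `W` (through the embedding `i : H → W`). -/
def Wplus {H W : Type*} [NormedAddCommGroup H] [InnerProductSpace ℝ H]
    [NormedAddCommGroup W] [NormedSpace ℝ W] (i : H →L[ℝ] W) : Set H :=
  {h | ∃ φ : W →L[ℝ] ℝ, ∀ k : H, φ (i k) = (inner ℝ k h : ℝ)}

/-- `A : H → H` extends continuously to `W`: there is a continuous linear
`Ā : W → H` with `Ā ∘ i = A`. -/
def ExtendsContinuously {H W : Type*} [NormedAddCommGroup H] [InnerProductSpace ℝ H]
    [NormedAddCommGroup W] [NormedSpace ℝ W] (i : H →L[ℝ] W) (A : H →L[ℝ] H) : Prop :=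
  ∃ Abar : W →L[ℝ] H, ∀ h : H, Abar (i h) = A h

/-- Membership in `HS₀`: Hilbert–Schmidt operators with finite-dimensional range
contained in `W₊` which extend continuously to `W`. -/
def MemHS0 {H W : Type*} [NormedAddCommGroup H] [InnerProductSpace ℝ H]
    [NormedAddCommGroup W] [NormedSpace ℝ W] (i : H →L[ℝ] W) (A : H →L[ℝ] H) : Prop :=
  IsHilbertSchmidt A ∧ FiniteDimensional ℝ (LinearMap.range (A : H →ₗ[ℝ] H)) ∧
    Set.range A ⊆ Wplus i ∧ ExtendsContinuously i A

/-!
If `A` extends to `W`, then so does each functional `k ↦ ⟪A k, y⟫ = ⟪k, A† y⟫`, so `range A†` lies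
in `W₊`. When `A ∈ HS₀`, the orthogonal projection `P` onto the finite-dimensional space
`range A + range A† ⊆ W₊` fixes `range A` and `range A†`, hence `P A = A` and
`A P = (P A†)† = A`. It extends to `W` because it is `∑ ⟪·, eⱼ⟫ eⱼ` for an orthonormal basis of
vectors `eⱼ ∈ W₊`. Conversely, finite rank, range in `W₊` and extendability pass from `P` to
`P A P`, and finite-rank operators are Hilbert–Schmidt since `A†` turns `‖A x‖²` into a finite sum
of terms `⟪x, aⱼ⟫²`, each summable over an orthonormal family by Bessel's inequality.
-/

open ContinuousLinearMap InnerProductSpace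

section FiniteRank

variable {𝕜 E F : Type*} [RCLike 𝕜]
  [NormedAddCommGroup E] [InnerProductSpace 𝕜 E] [NormedAddCommGroup F] [InnerProductSpace 𝕜 F]

theorem starProjection_comp_of_range_le {M : Type*} [TopologicalSpace M] [AddCommMonoid M]
    [Module 𝕜 M] {A : M →L[𝕜] F} {V : Submodule 𝕜 F} [V.HasOrthogonalProjection]
    (hA : A.range ≤ V) : V.starProjection ∘L A = A := by
  ext x
  exact V.starProjection_eq_self_iff.2 (hA ⟨x, rfl⟩)

variable [CompleteSpace E] [CompleteSpace F]

theorem comp_starProjection_of_range_adjoint_le {A : E →L[𝕜] F} {V : Submodule 𝕜 E}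
    [V.HasOrthogonalProjection] (hA : A.adjoint.range ≤ V) : A ∘L V.starProjection = A := by
  rw [← adjoint.injective.eq_iff, adjoint_comp, (isSelfAdjoint_starProjection V).adjoint_eq,
    starProjection_comp_of_range_le hA]

theorem finiteDimensional_range_adjoint (A : E →L[𝕜] F) [FiniteDimensional 𝕜 A.range] :
    FiniteDimensional 𝕜 A.adjoint.range := by
  have hA : A.adjoint ∘L A.range.starProjection = A.adjoint :=
    comp_starProjection_of_range_adjoint_le (by rw [adjoint_adjoint])
  rw [← hA, toLinearMap_comp, LinearMap.range_comp, Submodule.range_starProjection]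
  infer_instance

theorem summable_norm_sq_apply_of_orthonormal {ι : Type*} {v : ι → E}
    (hv : Orthonormal 𝕜 v) (A : E →L[𝕜] F) [FiniteDimensional 𝕜 A.range] :
    Summable fun n ↦ ‖A (v n)‖ ^ 2 := by
  let e := stdOrthonormalBasis 𝕜 A.range
  have parseval (x : E) : ‖A x‖ ^ 2 = ∑ j, ‖inner 𝕜 x (A.adjoint (e j))‖ ^ 2 := by
    simp only [adjoint_inner_right]
    exact (e.sum_sq_norm_inner_left ⟨A x, x, rfl⟩).symm
  simp only [parseval]
  exact summable_sum fun j _ ↦ hv.inner_products_summable (A.adjoint (e j))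

end FiniteRank

section HilbertSchmidt

variable {H : Type*} [NormedAddCommGroup H] [InnerProductSpace ℝ H]

theorem hsNormSq_lt_top_iff_summable {ι : Type*} {b : HilbertBasis ι ℝ H} {A : H →L[ℝ] H} :
    hsNormSq b A < ∞ ↔ Summable fun n ↦ ‖A (b n)‖ ^ 2 := by
  simp only [hsNormSq, ← ENNReal.coe_pow, lt_top_iff_ne_top,
    ENNReal.tsum_coe_ne_top_iff_summable_coe, NNReal.coe_pow, coe_nnnorm]

theorem isHilbertSchmidt_of_finiteDimensional_range [CompleteSpace H] (A : H →L[ℝ] H)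
    [FiniteDimensional ℝ A.range] : IsHilbertSchmidt A := fun _ b ↦
  hsNormSq_lt_top_iff_summable.2 (summable_norm_sq_apply_of_orthonormal b.orthonormal A)

end HilbertSchmidt

section Extension

variable {H W : Type*} [NormedAddCommGroup H] [InnerProductSpace ℝ H]
  [NormedAddCommGroup W] [NormedSpace ℝ W] {i : H →L[ℝ] W}

/-- The set `W₊` as a linear subspace of `H`, so that sums of ranges can be compared with it. -/
def wplusSubmodule (i : H →L[ℝ] W) : Submodule ℝ H where
  carrier := Wplus i
  zero_mem' := ⟨0, fun k ↦ by simp⟩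
  add_mem' := by
    rintro x y ⟨φ, hφ⟩ ⟨ψ, hψ⟩
    exact ⟨φ + ψ, fun k ↦ by simp [hφ, hψ, inner_add_right]⟩
  smul_mem' := by
    rintro c x ⟨φ, hφ⟩
    exact ⟨c • φ, fun k ↦ by simp [hφ, inner_smul_right]⟩

theorem extendsContinuously_sum_rankOne {ι : Type*} [Fintype ι] (x : ι → H) {y : ι → H}
    (hy : ∀ j, y j ∈ Wplus i) : ExtendsContinuously i (∑ j, rankOne ℝ (x j) (y j)) := by
  choose φ hφ using hy
  refine ⟨∑ j, (φ j).smulRight (x j), fun h ↦ ?_⟩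
  simp [hφ, real_inner_comm]

theorem extendsContinuously_starProjection {V : Submodule ℝ H} [FiniteDimensional ℝ V]
    (hV : V ≤ wplusSubmodule i) : ExtendsContinuously i V.starProjection := by
  let e := stdOrthonormalBasis ℝ V
  rw [e.starProjection_eq_sum_rankOne]
  exact extendsContinuously_sum_rankOne _ fun j ↦ hV (e j).2

variable [CompleteSpace H]

theorem ExtendsContinuously.range_adjoint_le {A : H →L[ℝ] H} (hA : ExtendsContinuously i A) :
    A.adjoint.range ≤ wplusSubmodule i := by
  obtain ⟨Abar, hAbar⟩ := hA
  rintro _ ⟨y, rfl⟩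
  refine ⟨innerSL ℝ y ∘L Abar, fun k ↦ ?_⟩
  simp [hAbar, adjoint_inner_right, real_inner_comm]

theorem memHS0_comp_comp {P Q : H →L[ℝ] H} [FiniteDimensional ℝ P.range]
    (hP : Set.range P ⊆ Wplus i) (hQ : ExtendsContinuously i Q) (B : H →L[ℝ] H) :
    MemHS0 i (P ∘L B ∘L Q) := by
  have hrange : (P ∘L B ∘L Q).range ≤ P.range := LinearMap.range_comp_le_range _ _
  have hfin : FiniteDimensional ℝ (P ∘L B ∘L Q).range := Submodule.finiteDimensional_of_le hrange
  obtain ⟨Qbar, hQbar⟩ := hQ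
  exact ⟨isHilbertSchmidt_of_finiteDimensional_range _, hfin,
    (Set.range_comp_subset_range (B ∘L Q) P).trans hP, P ∘L B ∘L Qbar, fun h ↦ by simp [hQbar]⟩

theorem hs0_iff_exists_projection_general (i : H →L[ℝ] W) (A : H →L[ℝ] H) :
    MemHS0 i A ↔
      ∃ P : H →L[ℝ] H,
        (∀ x y : H, (inner ℝ (P x) y : ℝ) = (inner ℝ x (P y) : ℝ)) ∧
        P ∘L P = P ∧
        FiniteDimensional ℝ (LinearMap.range (P : H →ₗ[ℝ] H)) ∧
        Set.range P ⊆ Wplus i ∧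
        ExtendsContinuously i P ∧
        A = P ∘L A ∘L P := by
  constructor
  · rintro ⟨-, hfin, hrange, hext⟩
    have hfinAdjoint := finiteDimensional_range_adjoint A
    let V : Submodule ℝ H := A.range ⊔ A.adjoint.range
    have hV : V ≤ wplusSubmodule i := sup_le hrange hext.range_adjoint_le
    refine ⟨V.starProjection, V.inner_starProjection_left_eq_right,
      V.isIdempotentElem_starProjection, ?_, ?_, extendsContinuously_starProjection hV, ?_⟩
    · rw [V.range_starProjection]
      infer_instance
    · rintro _ ⟨x, rfl⟩
      exact hV (V.starProjection_apply_mem x)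
    · rw [comp_starProjection_of_range_adjoint_le le_sup_right,
        starProjection_comp_of_range_le le_sup_left]
  · rintro ⟨P, -, -, hfin, hrange, hext, hA⟩
    rw [hA]
    exact memHS0_comp_comp hrange hext A

end Extension

/-- A Hilbert–Schmidt operator `A` on `H` belongs to `HS₀` if and only if there is a
finite-rank orthogonal projection `P` (i.e. a self-adjoint idempotent with
finite-dimensional range) whose range is contained in `W₊`, which extends continuously
to `W`, and such that `A = P ∘ A ∘ P`. -/
theorem hs0_iff_exists_projection
    {H W : Type*} [NormedAddCommGroup H] [InnerProductSpace ℝ H] [CompleteSpace H]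
    [TopologicalSpace.SeparableSpace H]
    [NormedAddCommGroup W] [NormedSpace ℝ W] [CompleteSpace W]
    [TopologicalSpace.SeparableSpace W]
    (i : H →L[ℝ] W) (hi : Function.Injective i) (hiDense : DenseRange i)
    (A : H →L[ℝ] H) (hA : IsHilbertSchmidt A) :
    MemHS0 i A ↔
      ∃ P : H →L[ℝ] H,
        (∀ x y : H, (inner ℝ (P x) y : ℝ) = (inner ℝ x (P y) : ℝ)) ∧
        P ∘L P = P ∧
        FiniteDimensional ℝ (LinearMap.range (P : H →ₗ[ℝ] H)) ∧
        Set.range P ⊆ Wplus i ∧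
        ExtendsContinuously i P ∧
        A = P ∘L A ∘L P :=
  hs0_iff_exists_projection_general i A

end
end

section
/- Let H be a real Hilbert space, let A : H → H be a skew-adjoint Hilbert–Schmidt operator (A* = −A), and let P be the orthogonal projection onto the orthogonal complement of a one-dimensional subspace of H (i.e. onto {h₀}^⊥ for some unit vector h₀). Then ‖P ∘ A‖_op = ‖A ∘ P‖_op = ‖A‖_op, where ‖·‖_op denotes the operator norm. -/
open scoped ENNReal

noncomputable section

/-!
Skew-adjointness of `A` gives `A x ⟂ x` and `‖A x‖ ^ 2 ≤ ‖x‖ * ‖A (A x)‖`. The vectors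
`z = s • x + t • A x` and `w = s • x - t • A x` therefore have equal norms, and the parallelogram
law shows that `‖A z‖ ^ 2 + ‖A w‖ ^ 2` is at least `2 * ‖A x‖ ^ 2 * ‖z‖ ^ 2` when `‖x‖ = 1`.
If `A x ≠ 0`, every hyperplane contains such a `z ≠ 0`. If `‖A z‖ ≤ c * ‖z‖` on that hyperplane,
then bounding `‖A w‖` by `‖A‖ * ‖w‖` yields `2 * ‖A x‖ ^ 2 ≤ c ^ 2 + ‖A‖ ^ 2` for all unit vectors
`x`, so that `2 * ‖A‖ ^ 2 ≤ c ^ 2 + ‖A‖ ^ 2`, that is, `‖A‖ ≤ c`. For the hyperplane `h₀ᗮ` this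
applies with `c = ‖A ∘ P‖`; the other composition has the same norm because `P ∘ A` and `-(A ∘ P)`
are adjoint.
-/

open scoped InnerProductSpace

section RCLike

variable {𝕜 E F : Type*} [RCLike 𝕜] [NormedAddCommGroup E] [InnerProductSpace 𝕜 E]
  [NormedAddCommGroup F] [InnerProductSpace 𝕜 F]

theorem opNorm_le_of_forall_inner_eq {S : E →L[𝕜] F} {T : F →L[𝕜] E}
    (hST : ∀ x y, ⟪S x, y⟫_𝕜 = ⟪x, T y⟫_𝕜) : ‖S‖ ≤ ‖T‖ := by
  refine S.opNorm_le_of_re_inner_le (norm_nonneg T) fun x y hx hy ↦ ?_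
  calc RCLike.re ⟪S x, y⟫_𝕜 = RCLike.re ⟪x, T y⟫_𝕜 := by rw [hST]
    _ ≤ ‖x‖ * ‖T y‖ := re_inner_le_norm x (T y)
    _ ≤ ‖T‖ := by simpa only [hx, hy, one_mul, mul_one] using T.le_opNorm y

theorem opNorm_eq_of_forall_inner_eq {S : E →L[𝕜] F} {T : F →L[𝕜] E}
    (hST : ∀ x y, ⟪S x, y⟫_𝕜 = ⟪x, T y⟫_𝕜) : ‖S‖ = ‖T‖ := by
  have hTS : ∀ y x, ⟪T y, x⟫_𝕜 = ⟪y, S x⟫_𝕜 := fun y x ↦ by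
    rw [← inner_conj_symm, ← hST, inner_conj_symm]
  exact le_antisymm (opNorm_le_of_forall_inner_eq hST) (opNorm_le_of_forall_inner_eq hTS)

theorem starProjection_orthogonal_unit_singleton {v : E} (hv : ‖v‖ = 1) (x : E) :
    (𝕜 ∙ v)ᗮ.starProjection x = x - ⟪v, x⟫_𝕜 • v := by
  rw [Submodule.starProjection_orthogonal_val, Submodule.starProjection_unit_singleton 𝕜 hv]

end RCLike

theorem exists_smul_add_smul_mem_ker {K V : Type*} [Field K] [AddCommGroup V] [Module K V]
    (f : V →ₗ[K] K) (x y : V) :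
    ∃ s t : K, (s ≠ 0 ∨ t ≠ 0) ∧ s • x + t • y ∈ f.ker := by
  by_cases hx : f x = 0
  · exact ⟨1, 0, .inl one_ne_zero, by simpa using hx⟩
  · refine ⟨f y, -f x, .inr (neg_ne_zero.mpr hx), ?_⟩
    simp only [LinearMap.mem_ker, map_add, map_smul, smul_eq_mul]
    ring

theorem norm_smul_sq_real {E : Type*} [SeminormedAddCommGroup E] [NormedSpace ℝ E]
    (s : ℝ) (x : E) : ‖s • x‖ ^ 2 = s ^ 2 * ‖x‖ ^ 2 := by
  rw [norm_smul, mul_pow, Real.norm_eq_abs, sq_abs]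

section Real

variable {H : Type*} [NormedAddCommGroup H] [InnerProductSpace ℝ H]

theorem norm_smul_add_smul_sq_of_inner_eq_zero {x y : H} (hxy : ⟪x, y⟫_ℝ = 0) (s t : ℝ) :
    ‖s • x + t • y‖ ^ 2 = s ^ 2 * ‖x‖ ^ 2 + t ^ 2 * ‖y‖ ^ 2 := by
  rw [norm_add_sq_real, real_inner_smul_left, real_inner_smul_right, hxy, norm_smul_sq_real,
    norm_smul_sq_real]
  ring

theorem norm_smul_sub_smul_of_inner_eq_zero {x y : H} (hxy : ⟪x, y⟫_ℝ = 0) (s t : ℝ) :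
    ‖s • x - t • y‖ = ‖s • x + t • y‖ := by
  refine norm_sub_eq_norm_add (𝕜 := ℝ) ?_
  rw [real_inner_smul_left, real_inner_smul_right, real_inner_comm, hxy, mul_zero, mul_zero]

theorem norm_smul_add_smul_sq_add_norm_smul_sub_smul_sq (x y : H) (s t : ℝ) :
    ‖s • x + t • y‖ ^ 2 + ‖s • x - t • y‖ ^ 2 = 2 * (s ^ 2 * ‖x‖ ^ 2 + t ^ 2 * ‖y‖ ^ 2) := by
  rw [parallelogram_law_with_norm ℝ, norm_smul_sq_real, norm_smul_sq_real]

theorem inner_self_map_eq_zero_of_skewAdjoint {A : H → H}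
    (hA : ∀ x y, ⟪A x, y⟫_ℝ = -⟪x, A y⟫_ℝ) (x : H) : ⟪x, A x⟫_ℝ = 0 := by
  linarith [hA x x, real_inner_comm x (A x)]

theorem norm_map_sq_le_of_skewAdjoint {A : H → H}
    (hA : ∀ x y, ⟪A x, y⟫_ℝ = -⟪x, A y⟫_ℝ) (x : H) : ‖A x‖ ^ 2 ≤ ‖x‖ * ‖A (A x)‖ := by
  calc ‖A x‖ ^ 2 = -⟪x, A (A x)⟫_ℝ := by rw [← real_inner_self_eq_norm_sq, hA]
    _ ≤ ‖x‖ * ‖A (A x)‖ := (neg_le_abs _).trans (abs_real_inner_le_norm _ _)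

theorem two_mul_norm_map_sq_mul_norm_sq_le_of_skewAdjoint {A : H →ₗ[ℝ] H}
    (hA : ∀ x y, ⟪A x, y⟫_ℝ = -⟪x, A y⟫_ℝ) (x : H) (s t : ℝ) :
    2 * ‖A x‖ ^ 2 * ‖s • x + t • A x‖ ^ 2 ≤
      ‖x‖ ^ 2 * (‖A (s • x + t • A x)‖ ^ 2 + ‖A (s • x - t • A x)‖ ^ 2) := by
  have h_sq : (‖A x‖ ^ 2) ^ 2 ≤ ‖x‖ ^ 2 * ‖A (A x)‖ ^ 2 := by
    rw [← mul_pow]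
    exact pow_le_pow_left₀ (sq_nonneg _) (norm_map_sq_le_of_skewAdjoint hA x) 2
  calc 2 * ‖A x‖ ^ 2 * ‖s • x + t • A x‖ ^ 2
      = 2 * (s ^ 2 * ‖x‖ ^ 2 * ‖A x‖ ^ 2 + t ^ 2 * (‖A x‖ ^ 2) ^ 2) := by
        rw [norm_smul_add_smul_sq_of_inner_eq_zero (inner_self_map_eq_zero_of_skewAdjoint hA x)]
        ring
    _ ≤ 2 * (s ^ 2 * ‖x‖ ^ 2 * ‖A x‖ ^ 2 + t ^ 2 * (‖x‖ ^ 2 * ‖A (A x)‖ ^ 2)) := by gcongr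
    _ = ‖x‖ ^ 2 * (‖A (s • x + t • A x)‖ ^ 2 + ‖A (s • x - t • A x)‖ ^ 2) := by
        rw [map_add, map_sub, map_smul, map_smul, norm_smul_add_smul_sq_add_norm_smul_sub_smul_sq]
        ring

theorem two_mul_norm_map_sq_le_of_skewAdjoint_of_le_on_ker {A : H →L[ℝ] H}
    (hA : ∀ x y, ⟪A x, y⟫_ℝ = -⟪x, A y⟫_ℝ) (f : H →ₗ[ℝ] ℝ) {c : ℝ}
    (hf : ∀ z ∈ f.ker, ‖A z‖ ≤ c * ‖z‖) (x : H) :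
    2 * ‖A x‖ ^ 2 ≤ (c ^ 2 + ‖A‖ ^ 2) * ‖x‖ ^ 2 := by
  rcases eq_or_ne (A x) 0 with hAx | hAx
  · rw [hAx, norm_zero, zero_pow two_ne_zero, mul_zero]
    positivity
  have hx : x ≠ 0 := by
    rintro rfl
    exact hAx (map_zero A)
  have h_orth : ⟪x, A x⟫_ℝ = 0 := inner_self_map_eq_zero_of_skewAdjoint hA x
  obtain ⟨s, t, hst, hz⟩ := exists_smul_add_smul_mem_ker f x (A x)
  set z := s • x + t • A x with hz_def
  set w := s • x - t • A x
  have hz_pos : 0 < ‖z‖ ^ 2 := by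
    rw [hz_def, norm_smul_add_smul_sq_of_inner_eq_zero h_orth]
    rcases hst with hs | ht <;> positivity
  have hw_norm : ‖w‖ = ‖z‖ := norm_smul_sub_smul_of_inner_eq_zero h_orth s t
  have hAz : ‖A z‖ ^ 2 ≤ c ^ 2 * ‖z‖ ^ 2 := by
    rw [← mul_pow]
    exact pow_le_pow_left₀ (norm_nonneg _) (hf z hz) 2
  have hAw : ‖A w‖ ^ 2 ≤ ‖A‖ ^ 2 * ‖z‖ ^ 2 := by
    rw [← mul_pow, ← hw_norm]
    exact pow_le_pow_left₀ (norm_nonneg _) (A.le_opNorm w) 2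
  refine le_of_mul_le_mul_right ?_ hz_pos
  calc 2 * ‖A x‖ ^ 2 * ‖z‖ ^ 2 ≤ ‖x‖ ^ 2 * (‖A z‖ ^ 2 + ‖A w‖ ^ 2) :=
        two_mul_norm_map_sq_mul_norm_sq_le_of_skewAdjoint (A := A.toLinearMap) hA x s t
    _ ≤ ‖x‖ ^ 2 * (c ^ 2 * ‖z‖ ^ 2 + ‖A‖ ^ 2 * ‖z‖ ^ 2) := by gcongr
    _ = (c ^ 2 + ‖A‖ ^ 2) * ‖x‖ ^ 2 * ‖z‖ ^ 2 := by ring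

theorem opNorm_le_of_skewAdjoint_of_le_on_ker {A : H →L[ℝ] H}
    (hA : ∀ x y, ⟪A x, y⟫_ℝ = -⟪x, A y⟫_ℝ) (f : H →ₗ[ℝ] ℝ) {c : ℝ} (hc : 0 ≤ c)
    (hf : ∀ z ∈ f.ker, ‖A z‖ ≤ c * ‖z‖) : ‖A‖ ≤ c := by
  have h_le_sqrt : ‖A‖ ≤ √((c ^ 2 + ‖A‖ ^ 2) / 2) := by
    refine A.opNorm_le_of_unit_norm (Real.sqrt_nonneg _) fun x hx ↦ Real.le_sqrt_of_sq_le ?_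
    have h_unit := two_mul_norm_map_sq_le_of_skewAdjoint_of_le_on_ker hA f hf x
    rw [hx] at h_unit
    linarith
  have h_sq_le : ‖A‖ ^ 2 ≤ (c ^ 2 + ‖A‖ ^ 2) / 2 :=
    (Real.le_sqrt (norm_nonneg A) (by positivity)).mp h_le_sqrt
  exact (sq_le_sq₀ (norm_nonneg A) hc).mp (by linarith)

theorem opNorm_comp_starProjection_orthogonal_singleton_of_skewAdjoint {A : H →L[ℝ] H}
    (hA : ∀ x y, ⟪A x, y⟫_ℝ = -⟪x, A y⟫_ℝ) (v : H) :
    ‖A ∘L (ℝ ∙ v)ᗮ.starProjection‖ = ‖A‖ := by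
  refine le_antisymm ?_ ?_
  · calc ‖A ∘L (ℝ ∙ v)ᗮ.starProjection‖ ≤ ‖A‖ * ‖(ℝ ∙ v)ᗮ.starProjection‖ :=
          A.opNorm_comp_le _
      _ ≤ ‖A‖ := mul_le_of_le_one_right (norm_nonneg A) (Submodule.starProjection_norm_le _)
  · refine opNorm_le_of_skewAdjoint_of_le_on_ker hA (innerₗ H v) (norm_nonneg _) fun z hz ↦ ?_
    have hPz : (ℝ ∙ v)ᗮ.starProjection z = z :=
      Submodule.starProjection_eq_self_iff.mpr <|
        Submodule.mem_orthogonal_singleton_iff_inner_right.mpr hz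
    simpa only [ContinuousLinearMap.comp_apply, hPz] using
      (A ∘L (ℝ ∙ v)ᗮ.starProjection).le_opNorm z

theorem opNorm_comp_comm_of_isSymmetric_of_skewAdjoint {S A : H →L[ℝ] H}
    (hS : S.toLinearMap.IsSymmetric) (hA : ∀ x y, ⟪A x, y⟫_ℝ = -⟪x, A y⟫_ℝ) :
    ‖S ∘L A‖ = ‖A ∘L S‖ := by
  rw [← norm_neg (A ∘L S)]
  refine opNorm_eq_of_forall_inner_eq fun x y ↦ ?_
  calc ⟪S (A x), y⟫_ℝ = ⟪A x, S y⟫_ℝ := hS (A x) y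
    _ = ⟪x, -A (S y)⟫_ℝ := by rw [hA, inner_neg_right]

theorem opNorm_proj_comp_skewAdjoint_general {A : H →L[ℝ] H}
    (hA : ∀ x y, ⟪A x, y⟫_ℝ = -⟪x, A y⟫_ℝ) (v : H) :
    ‖(ℝ ∙ v)ᗮ.starProjection ∘L A‖ = ‖A‖ ∧ ‖A ∘L (ℝ ∙ v)ᗮ.starProjection‖ = ‖A‖ := by
  have h_right := opNorm_comp_starProjection_orthogonal_singleton_of_skewAdjoint hA v
  have h_comm := opNorm_comp_comm_of_isSymmetric_of_skewAdjoint
    (ℝ ∙ v)ᗮ.starProjection_isSymmetric hA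
  exact ⟨h_comm.trans h_right, h_right⟩

end Real

/-- If `A` is a skew-adjoint Hilbert–Schmidt operator on a real Hilbert space `H` and
`P` is the orthogonal projection onto the orthogonal complement of the line spanned by
a unit vector `h₀`, then `‖P ∘ A‖_op = ‖A ∘ P‖_op = ‖A‖_op`. -/
theorem opNorm_proj_comp_skewAdjoint
    {H : Type*} [NormedAddCommGroup H] [InnerProductSpace ℝ H] [CompleteSpace H]
    [TopologicalSpace.SeparableSpace H]
    {ι : Type} (b : HilbertBasis ι ℝ H)
    (A : H →L[ℝ] H) (hHS : hsNormSq b A < ∞)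
    (hskew : ∀ x y : H, (inner ℝ (A x) y : ℝ) = -(inner ℝ x (A y) : ℝ))
    (h₀ : H) (hh₀ : ‖h₀‖ = 1)
    (P : H →L[ℝ] H) (hP : ∀ x : H, P x = x - (inner ℝ x h₀ : ℝ) • h₀) :
    ‖P ∘L A‖ = ‖A‖ ∧ ‖A ∘L P‖ = ‖A‖ := by
  obtain rfl : P = (ℝ ∙ h₀)ᗮ.starProjection := ContinuousLinearMap.ext fun x ↦ by
    rw [hP, starProjection_orthogonal_unit_singleton hh₀, real_inner_comm]
  exact opNorm_proj_comp_skewAdjoint_general hskew h₀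

end
end

section
/- Assume ω is non-degenerate in the sense that Ω_λ ≠ 0 for every λ ≠ 0, and fix T > 0. Then almost surely the random linear map ρ_T(B) is strictly positive definite: ℙ( for all λ ∈ ℝᵈ with λ ≠ 0, ⟨ρ_T(B)λ, λ⟩ > 0 ) = 1. In particular, ρ_T(B) is almost surely invertible. -/
open MeasureTheory ProbabilityTheory Filter

/-- A standard Brownian motion with values in a real inner product space `E`
(covariance `(t−s)·Id`): `B 0 = 0`, a.s. continuous sample paths on `[0,∞)`,
independent increments, and for `0 ≤ s ≤ t` and every `u ∈ E` the real random
variable `⟨B t − B s, u⟩` is Gaussian with mean `0` and variance `(t−s)‖u‖²`. -/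
structure IsStandardBM {E Ω : Type*} [NormedAddCommGroup E] [InnerProductSpace ℝ E]
    [MeasurableSpace E] [MeasurableSpace Ω] (P : Measure Ω)
    (B : ℝ → Ω → E) : Prop where
  init : ∀ ω, B 0 ω = 0
  meas : ∀ t : ℝ, Measurable (B t)
  cont : ∀ᵐ ω ∂P, ContinuousOn (fun t => B t ω) (Set.Ici 0)
  indep : ∀ (n : ℕ) (t : Fin (n + 1) → ℝ), (∀ i, 0 ≤ t i) → Monotone t →
    iIndepFun
      (fun i : Fin n => fun ω => B (t i.succ) ω - B (t i.castSucc) ω) P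
  gauss : ∀ s t : ℝ, 0 ≤ s → s ≤ t → ∀ u : E,
    Measure.map (fun ω => (inner ℝ (B t ω - B s ω) u : ℝ)) P =
      gaussianReal 0 ((t - s).toNNReal * ‖u‖₊ ^ 2)

/-!
If `⟨ρ_T(B)λ, λ⟩ = (1/4) ∫₀ᵀ ‖Ω_λ B_s‖² ds` vanishes then, by continuity of the path, `Ω_λ` kills
every `B_s` with `s ∈ [0, T]`. So it is enough that, outside one null set that does not depend on
`λ`, the path spans the whole space. It does: over `N` successive time intervals the increments are
independent and none of their laws charges a proper subspace, hence they are almost surely linearly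
independent, being drawn one after the other outside the span of the previous ones.
-/

section LinearIndependence

variable {𝕜 E : Type*} [NontriviallyNormedField 𝕜] [CompleteSpace 𝕜] [NormedAddCommGroup E]
  [NormedSpace 𝕜 E] [MeasurableSpace E] [BorelSpace E] [SecondCountableTopology E]

theorem measurableSet_setOf_linearIndependent_finCons (n : ℕ) :
    MeasurableSet {p : E × (Fin n → E) |
      LinearIndependent 𝕜 (Fin.cons p.1 p.2 : Fin (n + 1) → E)} :=
  have hcons : Continuous fun p : E × (Fin n → E) => (Fin.cons p.1 p.2 : Fin (n + 1) → E) :=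
    Continuous.finCons (A := fun _ => E) continuous_fst continuous_snd
  (isOpen_setOfPred_linearIndependent.preimage hcons).measurableSet

theorem ae_linearIndependent_pi {n : ℕ} (μ : Fin n → Measure E) [∀ i, SigmaFinite (μ i)]
    (hμ : ∀ i (W : Submodule 𝕜 E), Module.rank 𝕜 W < n → μ i W = 0) :
    ∀ᵐ x ∂Measure.pi μ, LinearIndependent 𝕜 x := by
  induction n with
  | zero => exact .of_forall fun _ => linearIndependent_empty_type
  | succ n ih =>
    have htail : ∀ᵐ v ∂Measure.pi fun i : Fin n => μ i.succ, LinearIndependent 𝕜 v :=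
      ih _ fun i W hW => hμ i.succ W (hW.trans (by exact_mod_cast n.lt_succ_self))
    have hhead : ∀ᵐ v ∂Measure.pi fun i : Fin n => μ i.succ, ∀ᵐ x ∂μ 0,
        LinearIndependent 𝕜 (Fin.cons x v : Fin (n + 1) → E) := by
      filter_upwards [htail] with v hv
      have hrank : Module.rank 𝕜 (Submodule.span 𝕜 (Set.range v)) < (n + 1 : ℕ) := by
        have := FiniteDimensional.span_of_finite 𝕜 (Set.finite_range v)
        rw [← Module.finrank_eq_rank, finrank_span_eq_card hv, Fintype.card_fin]
        exact_mod_cast n.lt_succ_self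
      filter_upwards [measure_eq_zero_iff_ae_notMem.1 (hμ 0 _ hrank)] with x hx
      exact linearIndependent_finCons.2 ⟨hv, hx⟩
    have hmeas := measurableSet_setOf_linearIndependent_finCons (𝕜 := 𝕜) (E := E) n
    have hprod := (Measure.ae_prod_iff_ae_ae hmeas).2 ((Measure.ae_ae_comm hmeas).2 hhead)
    filter_upwards [(measurePreserving_piFinSuccAbove μ 0).quasiMeasurePreserving.ae hprod]
      with x hx
    rwa [← Fin.cons_self_tail x]

theorem ae_linearIndependent_of_iIndepFun {Ω : Type*} [MeasurableSpace Ω] {P : Measure Ω}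
    [IsProbabilityMeasure P] {n : ℕ} {X : Fin n → Ω → E} (hX : ∀ i, AEMeasurable (X i) P)
    (hindep : iIndepFun X P)
    (hnull : ∀ i (W : Submodule 𝕜 E), Module.rank 𝕜 W < n → ∀ᵐ ω ∂P, X i ω ∉ W) :
    ∀ᵐ ω ∂P, LinearIndependent 𝕜 fun i => X i ω := by
  have : ∀ i, IsProbabilityMeasure (P.map (X i)) := fun i =>
    Measure.isProbabilityMeasure_map (hX i)
  refine ae_of_ae_map (p := fun x => LinearIndependent 𝕜 x) (aemeasurable_pi_lambda _ hX) ?_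
  rw [hindep.map_fun_eq_pi_map hX]
  refine ae_linearIndependent_pi _ fun i W hW => ?_
  have : FiniteDimensional 𝕜 W :=
    Module.rank_lt_aleph0_iff.1 (hW.trans Cardinal.natCast_lt_aleph0)
  rw [Measure.map_apply_of_aemeasurable (hX i) W.closed_of_finiteDimensional.measurableSet]
  exact measure_eq_zero_iff_ae_notMem.2 (hnull i W hW)

end LinearIndependence

theorem ae_notMem_of_ae_inner_ne_zero {E Ω : Type*} [NormedAddCommGroup E] [InnerProductSpace ℝ E]
    [MeasurableSpace Ω] {P : Measure Ω} {X : Ω → E}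
    (hX : ∀ u : E, u ≠ 0 → ∀ᵐ ω ∂P, inner ℝ (X ω) u ≠ 0)
    {W : Submodule ℝ E} [W.HasOrthogonalProjection] (hW : W ≠ ⊤) : ∀ᵐ ω ∂P, X ω ∉ W := by
  obtain ⟨u, hu, hu0⟩ :=
    Submodule.exists_mem_ne_zero_of_ne_bot (mt Submodule.orthogonal_eq_bot_iff.1 hW)
  filter_upwards [hX u hu0] with ω hω hmem
  exact hω (Submodule.inner_right_of_mem_orthogonal hmem hu)

theorem integral_norm_sq_apply_pos_of_span_eq_top {E G : Type*} [NormedAddCommGroup E]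
    [NormedSpace ℝ E] [NormedAddCommGroup G] [NormedSpace ℝ G] {x : ℝ → E} {a b : ℝ} (hab : a < b)
    (hx : ContinuousOn x (Set.Icc a b)) (hspan : Submodule.span ℝ (x '' Set.Icc a b) = ⊤)
    {A : E →L[ℝ] G} (hA : A ≠ 0) : 0 < ∫ s in a..b, ‖A (x s)‖ ^ 2 := by
  have hne : ∃ s ∈ Set.Icc a b, A (x s) ≠ 0 := by
    by_contra! hzero
    refine hA (ContinuousLinearMap.coe_injective (LinearMap.ext_on hspan ?_))
    rintro _ ⟨s, hs, rfl⟩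
    exact hzero s hs
  obtain ⟨s, hs, hAs⟩ := hne
  exact intervalIntegral.integral_pos hab ((A.continuous.comp_continuousOn hx).norm.pow 2)
    (fun _ _ => sq_nonneg _) ⟨s, hs, pow_pos (norm_pos_iff.2 hAs) 2⟩

namespace IsStandardBM

variable {E Ω : Type*} [NormedAddCommGroup E] [InnerProductSpace ℝ E] [MeasurableSpace E]
  [BorelSpace E] [MeasurableSpace Ω] {P : Measure Ω} {B : ℝ → Ω → E}

theorem ae_inner_sub_ne_zero [SecondCountableTopology E] (hB : IsStandardBM P B) {s t : ℝ}
    (hs : 0 ≤ s) (hst : s < t) {u : E} (hu : u ≠ 0) :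
    ∀ᵐ ω ∂P, inner ℝ (B t ω - B s ω) u ≠ 0 := by
  have hmeas : Measurable fun ω => inner ℝ (B t ω - B s ω) u :=
    ((hB.meas t).sub (hB.meas s)).inner_const
  have hvar : (t - s).toNNReal * ‖u‖₊ ^ 2 ≠ 0 := by simp [hst, hu]
  have := nullSingletonClass_gaussianReal (μ := 0) hvar
  refine ae_of_ae_map (p := (· ≠ 0)) hmeas.aemeasurable ?_
  rw [hB.gauss s t hs hst.le u]
  exact Measure.ae_ne _ 0

variable [FiniteDimensional ℝ E] [IsProbabilityMeasure P]

theorem ae_linearIndependent_increments (hB : IsStandardBM P B) {n : ℕ}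
    (hn : n ≤ Module.finrank ℝ E) {t : Fin (n + 1) → ℝ} (ht0 : ∀ i, 0 ≤ t i) (ht : StrictMono t) :
    ∀ᵐ ω ∂P, LinearIndependent ℝ fun i : Fin n => B (t i.succ) ω - B (t i.castSucc) ω := by
  refine ae_linearIndependent_of_iIndepFun
    (fun i => ((hB.meas _).sub (hB.meas _)).aemeasurable)
    (hB.indep n t ht0 ht.monotone) fun i W hW => ?_
  have hWtop : W ≠ ⊤ := by
    rintro rfl
    rw [rank_top, ← Module.finrank_eq_rank, Nat.cast_lt] at hW
    exact hn.not_gt hW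
  exact ae_notMem_of_ae_inner_ne_zero
    (fun _ => hB.ae_inner_sub_ne_zero (ht0 _) (ht i.castSucc_lt_succ)) hWtop

theorem ae_span_image_eq_top (hB : IsStandardBM P B) {S : Set ℝ} (hS : S.Infinite)
    (hS0 : S ⊆ Set.Ici 0) : ∀ᵐ ω ∂P, Submodule.span ℝ ((B · ω) '' S) = ⊤ := by
  obtain ⟨F, hFS, hF⟩ := hS.exists_subset_card_eq (Module.finrank ℝ E + 1)
  let t := F.orderEmbOfFin hF
  have htS : ∀ i, t i ∈ S := fun i => hFS (F.orderEmbOfFin_mem hF i)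
  filter_upwards [hB.ae_linearIndependent_increments le_rfl (fun i => hS0 (htS i)) t.strictMono]
    with ω hω
  have hmem : ∀ i, B (t i) ω ∈ Submodule.span ℝ ((B · ω) '' S) := fun i =>
    Submodule.subset_span ⟨t i, htS i, rfl⟩
  rw [eq_top_iff, ← hω.span_eq_top_of_card_eq_finrank' (Fintype.card_fin _), Submodule.span_le]
  rintro _ ⟨i, rfl⟩
  exact sub_mem (hmem i.succ) (hmem i.castSucc)

theorem ae_integral_norm_sq_apply_pos (hB : IsStandardBM P B) (G : Type*) [NormedAddCommGroup G]
    [NormedSpace ℝ G] {T : ℝ} (hT : 0 < T) :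
    ∀ᵐ ω ∂P, ∀ A : E →L[ℝ] G, A ≠ 0 → 0 < ∫ s in (0 : ℝ)..T, ‖A (B s ω)‖ ^ 2 := by
  have hsub : Set.Icc 0 T ⊆ Set.Ici 0 := Set.Icc_subset_Ici_self
  filter_upwards [hB.cont, hB.ae_span_image_eq_top (Set.Icc_infinite hT) hsub]
    with ω hcont hspan A hA
  exact integral_norm_sq_apply_pos_of_span_eq_top hT (hcont.mono hsub) hspan hA

end IsStandardBM

theorem rho_ae_posDef_general {E F G Ω : Type*}
    [NormedAddCommGroup E] [InnerProductSpace ℝ E] [FiniteDimensional ℝ E]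
    [MeasurableSpace E] [BorelSpace E]
    [NormedAddCommGroup F] [InnerProductSpace ℝ F] [NormedAddCommGroup G] [InnerProductSpace ℝ G]
    (Om : F → E →L[ℝ] G) (hnd : ∀ lam, lam ≠ 0 → Om lam ≠ 0) {T : ℝ} (hT : 0 < T)
    [MeasurableSpace Ω] {P : Measure Ω} [IsProbabilityMeasure P] {B : ℝ → Ω → E}
    (hB : IsStandardBM P B) (rho : Ω → F → F)
    (hrho : ∀ ω lam lam', inner ℝ (rho ω lam) lam' =
      (1 / 4) * ∫ s in (0 : ℝ)..T, inner ℝ (Om lam (B s ω)) (Om lam' (B s ω))) :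
    P {ω | ∀ lam, lam ≠ 0 → 0 < inner ℝ (rho ω lam) lam} = 1 := by
  rw [← measure_univ (μ := P)]
  refine measure_congr (eventuallyEq_univ.2 ?_)
  filter_upwards [hB.ae_integral_norm_sq_apply_pos G hT] with ω hω lam hlam
  simp only [hrho, real_inner_self_eq_norm_sq]
  exact mul_pos (by norm_num) (hω _ (hnd lam hlam))

/-- Almost sure strict positive definiteness of `ρ_T(B)`: assuming `ω` is
non-degenerate (`Ω_λ ≠ 0` for `λ ≠ 0`) and `T > 0`, almost surely
`⟨ρ_T(B)λ, λ⟩ > 0` for all `λ ≠ 0`. -/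
theorem rho_ae_posDef (N d : ℕ) (hN : 1 ≤ N) (hd : 1 ≤ d)
    (w : EuclideanSpace ℝ (Fin N) →ₗ[ℝ] EuclideanSpace ℝ (Fin N) →ₗ[ℝ]
      EuclideanSpace ℝ (Fin d))
    (hskew : ∀ h k : EuclideanSpace ℝ (Fin N), w h k = -w k h)
    (Om : EuclideanSpace ℝ (Fin d) →
      (EuclideanSpace ℝ (Fin N) →L[ℝ] EuclideanSpace ℝ (Fin N)))
    (hOm : ∀ (lam : EuclideanSpace ℝ (Fin d)) (h k : EuclideanSpace ℝ (Fin N)),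
      (inner ℝ (Om lam h) k : ℝ) = (inner ℝ (w h k) lam : ℝ))
    (hnd : ∀ lam : EuclideanSpace ℝ (Fin d), lam ≠ 0 → Om lam ≠ 0)
    (T : ℝ) (hT : 0 < T)
    {Ω : Type*} [MeasurableSpace Ω] (P : Measure Ω) [IsProbabilityMeasure P]
    (B : ℝ → Ω → EuclideanSpace ℝ (Fin N)) (hB : IsStandardBM P B)
    (rho : Ω → (EuclideanSpace ℝ (Fin d) →L[ℝ] EuclideanSpace ℝ (Fin d)))
    (hrho : ∀ (ω : Ω) (lam lam' : EuclideanSpace ℝ (Fin d)),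
      (inner ℝ (rho ω lam) lam' : ℝ) =
        (1 / 4) * ∫ s in (0:ℝ)..T, (inner ℝ (Om lam (B s ω)) (Om lam' (B s ω)) : ℝ)) :
    P {ω | ∀ lam : EuclideanSpace ℝ (Fin d), lam ≠ 0 →
      0 < (inner ℝ (rho ω lam) lam : ℝ)} = 1 :=
  rho_ae_posDef_general Om hnd hT hB (fun ω => rho ω) hrho
end

section
/- Let A be a real N×N skew-symmetric matrix (Aᵀ = −A), let Σ be the positive semidefinite square root of AᵀA = −A², and let Φ(x) = exp(−(1/2)⟨Σx, x⟩). Then for every twice continuously differentiable function g : ℝᴺ → ℝ and every x ∈ ℝᴺ, (1/2)Δ(Φg)(x) − (1/2)‖Ax‖²(Φg)(x) = Φ(x)·( (1/2)Δg(x) − ⟨Σx, ∇g(x)⟩ − (1/2)tr(Σ)·g(x) ). -/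
/-!
With `q x = -(1/2)⟨Σx, x⟩`, symmetry of `Σ` gives `∇q x = -Σx` and `Δq = -tr Σ`, so the chain rule
`Δ(exp ∘ q) = exp q · (Δq + ‖∇q‖²)` shows that `Φ = exp ∘ q` satisfies `∇Φ x = -Φ x · Σx` and
`ΔΦ x = (‖Σx‖² - tr Σ) Φ x`. The product rule `Δ(Φg) = Φ Δg + 2⟨∇Φ, ∇g⟩ + g ΔΦ` then produces the
right-hand side together with the potential term `‖Σx‖² Φ g`, and `‖Σx‖ = ‖Ax‖` because `Σ² = AᵀA`.
-/

noncomputable section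

/-- The Laplacian of `f : ℝᴺ → ℝ` at `x`: the trace of the second derivative,
`Δf(x) = ∑ i, D²f(x)(eᵢ, eᵢ)` with `(eᵢ)` the standard orthonormal basis. -/
def lap {N : ℕ} (f : EuclideanSpace ℝ (Fin N) → ℝ) (x : EuclideanSpace ℝ (Fin N)) : ℝ :=
  ∑ i : Fin N, fderiv ℝ (fderiv ℝ f) x (EuclideanSpace.single i (1 : ℝ))
    (EuclideanSpace.single i (1 : ℝ))

open scoped InnerProductSpace Gradient Topology
open Laplacian

section SecondDerivative

variable {𝕜 E F : Type*} [NontriviallyNormedField 𝕜] [NormedAddCommGroup E] [NormedSpace 𝕜 E]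
  [NormedAddCommGroup F] [NormedSpace 𝕜 F] {f : E → 𝕜} {g : E → F} {x : E}

theorem differentiableAt_fderiv_of_contDiffAt_two (hg : ContDiffAt 𝕜 2 g x) :
    DifferentiableAt 𝕜 (fderiv 𝕜 g) x :=
  (hg.fderiv_right (m := 1) (by norm_num)).differentiableAt one_ne_zero

theorem eventually_differentiableAt_of_contDiffAt_two (hg : ContDiffAt 𝕜 2 g x) :
    ∀ᶠ y in 𝓝 x, DifferentiableAt 𝕜 g y :=
  (hg.eventually (by simp)).mono fun _ hy => hy.differentiableAt two_ne_zero

theorem fderiv_fderiv_fun_smul_apply (hf : ContDiffAt 𝕜 2 f x) (hg : ContDiffAt 𝕜 2 g x)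
    (v w : E) :
    fderiv 𝕜 (fderiv 𝕜 (fun y => f y • g y)) x v w =
      f x • fderiv 𝕜 (fderiv 𝕜 g) x v w + fderiv 𝕜 f x v • fderiv 𝕜 g x w +
        fderiv 𝕜 f x w • fderiv 𝕜 g x v + fderiv 𝕜 (fderiv 𝕜 f) x v w • g x := by
  have hfderiv : fderiv 𝕜 (fun y => f y • g y) =ᶠ[𝓝 x]
      fun y => f y • fderiv 𝕜 g y + (fderiv 𝕜 f y).smulRight (g y) := by
    filter_upwards [eventually_differentiableAt_of_contDiffAt_two hf,
      eventually_differentiableAt_of_contDiffAt_two hg] with y hfy hgy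
    exact fderiv_fun_smul hfy hgy
  have hf₁ := (hf.differentiableAt two_ne_zero).hasFDerivAt
  have hg₁ := (hg.differentiableAt two_ne_zero).hasFDerivAt
  have hf₂ := (differentiableAt_fderiv_of_contDiffAt_two hf).hasFDerivAt
  have hg₂ := (differentiableAt_fderiv_of_contDiffAt_two hg).hasFDerivAt
  have hderiv := (hf₁.smul hg₂).add
    ((ContinuousLinearMap.smulRightL 𝕜 E F).hasFDerivAt_of_bilinear hf₂ hg₁)
  rw [(hderiv.congr_of_eventuallyEq hfderiv).fderiv]
  simp [add_assoc]

theorem fderiv_fderiv_comp_apply {h : 𝕜 → F} (hh : ContDiffAt 𝕜 2 h (f x))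
    (hf : ContDiffAt 𝕜 2 f x) (v w : E) :
    fderiv 𝕜 (fderiv 𝕜 (h ∘ f)) x v w =
      fderiv 𝕜 (fderiv 𝕜 f) x v w • deriv h (f x) +
        (fderiv 𝕜 f x v * fderiv 𝕜 f x w) • deriv (deriv h) (f x) := by
  have hfderiv : fderiv 𝕜 (h ∘ f) =ᶠ[𝓝 x]
      fun y => (fderiv 𝕜 f y).smulRight (deriv h (f y)) := by
    filter_upwards [eventually_differentiableAt_of_contDiffAt_two hf,
      hf.continuousAt.eventually (eventually_differentiableAt_of_contDiffAt_two hh)] with y hfy hhy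
    ext v
    simp [fderiv_comp y hhy hfy]
  have hf₁ := (hf.differentiableAt two_ne_zero).hasFDerivAt
  have hf₂ := (differentiableAt_fderiv_of_contDiffAt_two hf).hasFDerivAt
  have hh₂ : HasDerivAt (deriv h) (deriv (deriv h) (f x)) (f x) :=
    ((differentiableAt_fderiv_of_contDiffAt_two hh).clm_apply
      (differentiableAt_const (1 : 𝕜))).hasDerivAt
  have hderiv := (ContinuousLinearMap.smulRightL 𝕜 E F).hasFDerivAt_of_bilinear hf₂
    (hh₂.hasFDerivAt.comp x hf₁)
  rw [(hderiv.congr_of_eventuallyEq hfderiv).fderiv]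
  simp [smul_smul, add_comm]

theorem fderiv_bilinear_apply_self (B : E →L[𝕜] E →L[𝕜] F) :
    fderiv 𝕜 (fun y => B y y) = ⇑(B + B.flip) := by
  ext y v
  simp [B.fderiv_of_bilinear differentiableAt_fun_id differentiableAt_fun_id]

end SecondDerivative

section Gradient

variable {E : Type*} [NormedAddCommGroup E] [InnerProductSpace ℝ E] [CompleteSpace E]

theorem gradient_comp {h : ℝ → ℝ} {f : E → ℝ} {x : E} (hh : DifferentiableAt ℝ h (f x))
    (hf : DifferentiableAt ℝ f x) : ∇ (h ∘ f) x = deriv h (f x) • ∇ f x := by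
  rw [gradient, (hh.hasDerivAt.comp_hasFDerivAt x hf.hasFDerivAt).fderiv, map_smul, gradient]

theorem sum_fderiv_smul_eq_map_gradient {F ι : Type*} [NormedAddCommGroup F] [NormedSpace ℝ F]
    [Fintype ι] (b : OrthonormalBasis ι ℝ E) (f : E → ℝ) (L : E →L[ℝ] F) (x : E) :
    ∑ i, fderiv ℝ f x (b i) • L (b i) = L (∇ f x) := by
  conv_rhs => rw [← b.sum_repr' (∇ f x), map_sum]
  simp [inner_gradient_right]

end Gradient

section Laplacian

variable {E F : Type*} [NormedAddCommGroup E] [InnerProductSpace ℝ E] [FiniteDimensional ℝ E]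
  [NormedAddCommGroup F] [NormedSpace ℝ F] {f : E → ℝ} {g : E → F} {x : E}

theorem laplacian_eq_sum_fderiv_fderiv {ι : Type*} [Fintype ι] (b : OrthonormalBasis ι ℝ E)
    (g : E → F) (x : E) : Δ g x = ∑ i, fderiv ℝ (fderiv ℝ g) x (b i) (b i) := by
  simp [InnerProductSpace.laplacian_eq_iteratedFDeriv_orthonormalBasis g b,
    iteratedFDeriv_two_apply]

theorem lap_eq_laplacian {N : ℕ} (g : EuclideanSpace ℝ (Fin N) → ℝ) : lap g = Δ g := by
  ext x
  simp [lap, laplacian_eq_sum_fderiv_fderiv (EuclideanSpace.basisFun (Fin N) ℝ)]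

theorem laplacian_fun_smul (hf : ContDiffAt ℝ 2 f x) (hg : ContDiffAt ℝ 2 g x) :
    Δ (fun y => f y • g y) x =
      f x • Δ g x + (2 : ℝ) • fderiv ℝ g x (∇ f x) + Δ f x • g x := by
  simp only [laplacian_eq_sum_fderiv_fderiv (stdOrthonormalBasis ℝ E),
    fderiv_fderiv_fun_smul_apply hf hg, Finset.sum_add_distrib, ← Finset.smul_sum,
    ← Finset.sum_smul, sum_fderiv_smul_eq_map_gradient]
  module

theorem laplacian_comp {h : ℝ → F} (hh : ContDiffAt ℝ 2 h (f x)) (hf : ContDiffAt ℝ 2 f x) :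
    Δ (h ∘ f) x = Δ f x • deriv h (f x) + ‖∇ f x‖ ^ 2 • deriv (deriv h) (f x) := by
  have hnorm : ∑ i, fderiv ℝ f x (stdOrthonormalBasis ℝ E i) *
      fderiv ℝ f x (stdOrthonormalBasis ℝ E i) = ‖∇ f x‖ ^ 2 := by
    rw [← real_inner_self_eq_norm_sq, inner_gradient_left]
    exact sum_fderiv_smul_eq_map_gradient (stdOrthonormalBasis ℝ E) f (fderiv ℝ f x) x
  simp only [laplacian_eq_sum_fderiv_fderiv (stdOrthonormalBasis ℝ E),
    fderiv_fderiv_comp_apply hh hf, Finset.sum_add_distrib, ← Finset.sum_smul, hnorm]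

theorem laplacian_bilinear_apply_self {ι : Type*} [Fintype ι]
    (b : OrthonormalBasis ι ℝ E) (B : E →L[ℝ] E →L[ℝ] F) (x : E) :
    Δ (fun y => B y y) x = (2 : ℝ) • ∑ i, B (b i) (b i) := by
  rw [laplacian_eq_sum_fderiv_fderiv b, fderiv_bilinear_apply_self,
    ContinuousLinearMap.fderiv, Finset.smul_sum]
  simp [two_smul]

end Laplacian

section QuadraticForm

variable {E : Type*} [NormedAddCommGroup E] [InnerProductSpace ℝ E]

theorem contDiff_inner_map_self (T : E →L[ℝ] E) {n : WithTop ℕ∞} :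
    ContDiff ℝ n (fun y => ⟪T y, y⟫_ℝ) :=
  T.contDiff.inner ℝ contDiff_id

theorem gradient_inner_map_self [CompleteSpace E] {T : E →L[ℝ] E} (hT : IsSelfAdjoint T) (x : E) :
    ∇ (fun y => ⟪T y, y⟫_ℝ) x = (2 : ℝ) • T x := by
  refine ext_inner_right ℝ fun v => ?_
  have hsymm : ⟪T v, x⟫_ℝ = ⟪T x, v⟫_ℝ :=
    (hT.isSymmetric v x).trans (real_inner_comm _ _)
  calc ⟪∇ (fun y => ⟪T y, y⟫_ℝ) x, v⟫_ℝ
      = ⟪T x, v⟫_ℝ + ⟪T v, x⟫_ℝ := by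
        rw [inner_gradient_left]
        exact congrArg (fun L => L x v) (fderiv_bilinear_apply_self ((innerSL ℝ).comp T))
    _ = ⟪(2 : ℝ) • T x, v⟫_ℝ := by
        rw [hsymm, two_smul, inner_add_left]

theorem laplacian_inner_map_self [FiniteDimensional ℝ E] (T : E →L[ℝ] E) (x : E) :
    Δ (fun y => ⟪T y, y⟫_ℝ) x = 2 * LinearMap.trace ℝ E T := by
  rw [LinearMap.trace_eq_sum_inner _ (stdOrthonormalBasis ℝ E)]
  simpa [real_inner_comm] using
    laplacian_bilinear_apply_self (stdOrthonormalBasis ℝ E) ((innerSL ℝ).comp T) x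

end QuadraticForm

section GroundState

variable {E : Type*} [NormedAddCommGroup E] [InnerProductSpace ℝ E]

/-- The Gaussian `Φ x = exp (-(1/2)⟨S x, x⟩)`, not normalised. For invertible `A` and `S = √(A* A)`
it spans the ground state of the harmonic oscillator `-(1/2)Δ + (1/2)‖A x‖²`. -/
def groundState (S : E →L[ℝ] E) (x : E) : ℝ :=
  Real.exp (-(1 / 2) * ⟪S x, x⟫_ℝ)

theorem groundState_eq_exp_comp (S : E →L[ℝ] E) :
    groundState S = Real.exp ∘ fun y => ⟪(-(1 / 2 : ℝ) • S) y, y⟫_ℝ := by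
  ext y
  simp [groundState, inner_smul_left]

theorem contDiff_groundState (S : E →L[ℝ] E) {n : WithTop ℕ∞} : ContDiff ℝ n (groundState S) := by
  rw [groundState_eq_exp_comp]
  exact Real.contDiff_exp.comp (contDiff_inner_map_self _)

theorem gradient_neg_half_inner_map_self [CompleteSpace E] {S : E →L[ℝ] E} (hS : IsSelfAdjoint S)
    (x : E) : ∇ (fun y => ⟪(-(1 / 2 : ℝ) • S) y, y⟫_ℝ) x = -S x := by
  rw [gradient_inner_map_self ((IsSelfAdjoint.all (-(1 / 2 : ℝ))).smul hS)]
  simp [smul_smul]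

theorem gradient_groundState [CompleteSpace E] {S : E →L[ℝ] E} (hS : IsSelfAdjoint S) (x : E) :
    ∇ (groundState S) x = -(groundState S x • S x) := by
  rw [groundState_eq_exp_comp, gradient_comp Real.differentiableAt_exp
    ((contDiff_inner_map_self _).differentiable one_ne_zero x), Real.deriv_exp,
    gradient_neg_half_inner_map_self hS, smul_neg, Function.comp_apply]

theorem laplacian_groundState [FiniteDimensional ℝ E] {S : E →L[ℝ] E} (hS : IsSelfAdjoint S)
    (x : E) :
    Δ (groundState S) x = (‖S x‖ ^ 2 - LinearMap.trace ℝ E S) * groundState S x := by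
  have hlap : Δ (fun y => ⟪(-(1 / 2 : ℝ) • S) y, y⟫_ℝ) x = -LinearMap.trace ℝ E S := by
    rw [laplacian_inner_map_self, ContinuousLinearMap.toLinearMap_smul, map_smul, smul_eq_mul]
    ring
  rw [groundState_eq_exp_comp, laplacian_comp Real.contDiff_exp.contDiffAt
    (contDiff_inner_map_self _).contDiffAt, gradient_neg_half_inner_map_self hS, hlap, norm_neg,
    Real.deriv_exp, Real.deriv_exp, Function.comp_apply, smul_eq_mul, smul_eq_mul]
  ring

end GroundState

theorem trace_toEuclideanCLM {𝕜 ι : Type*} [RCLike 𝕜] [Fintype ι] [DecidableEq ι]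
    (M : Matrix ι ι 𝕜) :
    LinearMap.trace 𝕜 (EuclideanSpace 𝕜 ι) (Matrix.toEuclideanCLM (𝕜 := 𝕜) M) = M.trace := by
  rw [Matrix.coe_toEuclideanCLM_eq_toEuclideanLin, Matrix.toEuclideanLin_eq_toLin_orthonormal,
    Matrix.trace_toLin_eq]

theorem ground_state_transform_general {E F G : Type*}
    [NormedAddCommGroup E] [InnerProductSpace ℝ E] [FiniteDimensional ℝ E]
    [NormedAddCommGroup F] [InnerProductSpace ℝ F] [CompleteSpace F]
    [NormedAddCommGroup G] [NormedSpace ℝ G]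
    {A : E →L[ℝ] F} {S : E →L[ℝ] E} (hS : IsSelfAdjoint S) (hSA : S ∘L S = A.adjoint ∘L A)
    {g : E → G} {x : E} (hg : ContDiffAt ℝ 2 g x) :
    (1 / 2 : ℝ) • Δ (fun y => groundState S y • g y) x -
        (1 / 2 * ‖A x‖ ^ 2) • groundState S x • g x =
      groundState S x • ((1 / 2 : ℝ) • Δ g x - fderiv ℝ g x (S x) -
        (1 / 2 * LinearMap.trace ℝ E S) • g x) := by
  have hnorm : ‖A x‖ ^ 2 = ‖S x‖ ^ 2 := by
    rw [A.apply_norm_sq_eq_inner_adjoint_left, S.apply_norm_sq_eq_inner_adjoint_left,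
      hS.adjoint_eq, hSA]
  rw [laplacian_fun_smul (contDiff_groundState S).contDiffAt hg, gradient_groundState hS,
    laplacian_groundState hS, hnorm, map_neg, map_smul]
  module

/-- Ground state transform: with `A` skew-symmetric, `Σ` the positive semidefinite
square root of `AᵀA = −A²` and `Φ(x) = exp(−(1/2)⟨Σx,x⟩)`, for every `C²` function `g`
and every `x`:
`(1/2)Δ(Φg)(x) − (1/2)‖Ax‖²(Φg)(x) = Φ(x)·((1/2)Δg(x) − ⟨Σx, ∇g(x)⟩ − (1/2)(tr Σ)g(x))`. -/
theorem ground_state_transform (N : ℕ) (A S : Matrix (Fin N) (Fin N) ℝ)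
    (hA : A.transpose = -A) (hS : S.PosSemidef) (hS2 : S * S = A.transpose * A)
    (Φ : EuclideanSpace ℝ (Fin N) → ℝ)
    (hΦ : ∀ x, Φ x = Real.exp (-(1 / 2) * (inner ℝ (Matrix.toEuclideanLin S x) x : ℝ)))
    (g : EuclideanSpace ℝ (Fin N) → ℝ) (hg : ContDiff ℝ 2 g)
    (x : EuclideanSpace ℝ (Fin N)) :
    (1 / 2) * lap (fun y => Φ y * g y) x
        - (1 / 2) * ‖Matrix.toEuclideanLin A x‖ ^ 2 * (Φ x * g x) =
      Φ x * ((1 / 2) * lap g x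
        - (inner ℝ (Matrix.toEuclideanLin S x) (gradient g x) : ℝ)
        - (1 / 2) * Matrix.trace S * g x) := by
  let T := Matrix.toEuclideanCLM (n := Fin N) (𝕜 := ℝ)
  obtain rfl : Φ = groundState (T S) := funext hΦ
  have hlin (M : Matrix (Fin N) (Fin N) ℝ) (y) : Matrix.toEuclideanLin M y = T M y := rfl
  have hT : IsSelfAdjoint (T S) := hS.isHermitian.isSelfAdjoint.map T
  have hSA : T S ∘L T S = (T A).adjoint ∘L T A := by
    have h := congrArg T hS2
    rwa [← Matrix.conjTranspose_eq_transpose_of_trivial, map_mul, map_mul,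
      ← Matrix.star_eq_conjTranspose, map_star] at h
  simpa only [lap_eq_laplacian, hlin, inner_gradient_right, conj_trivial, smul_eq_mul,
    trace_toEuclideanCLM, T] using ground_state_transform_general hT hSA hg.contDiffAt (x := x)

end
end
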